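/- For each process i, the phase-forgetting relation ≅_i defined on the states of the transaction system by (q,h) ≅_i (q',h') iff q = q' and h_j = h'_j for all j ≠ i is a thread bisimulation of the transaction system CTS'. -/

import Mathlib

/-!
A step of the transaction system is a step `q →α q1` of the underlying system together with an
update of the phase of the process of `α`; all other phases are untouched and do not influence the
step. Hence a step from `(q, h)` can be copied from any `(q, h')` with `h` and `h'` equal off `i`.
If the moving process is not `i`, its old phase is the same in both states and its new phase is
reused. If it is `i`, its new phase is irrelevant for `≅_i`, and it suffices that some new phase is
always admissible: `R` if the condition for `R` holds, and `N` otherwise.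
-/

namespace TRF

/-- Phases of a transaction: external (N), pre-phase (R), post-phase (L). -/
inductive Phase : Type
  | N | R | L
deriving DecidableEq

/-- A concurrent transition system (CTS) over states `X`, actions `A` and
processes `P`.  The partition `A = ⨄ A_i` is given by the map `proc`
assigning to each action the (unique) process it belongs to. -/
structure CTS (X A P : Type) where
  T : X → A → X → Prop
  proc : A → P
  q0 : X

variable {X A P : Type}

/-- Sequential composition of binary relations. -/
def RComp {S : Type _} (r s : S → S → Prop) : S → S → Prop :=
  fun x z => ∃ y, r x y ∧ s y z

namespace CTS

/-- The relation `→α`. -/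
def rel (S : CTS X A P) (α : A) : X → X → Prop := fun q q' => S.T q α q'

/-- The relation `→_i` (union of `→α` over `α ∈ A_i`). -/
def stepOf (S : CTS X A P) (i : P) : X → X → Prop :=
  fun q q' => ∃ α, S.proc α = i ∧ S.T q α q'

/-- The relation `→` (union of all `→α`). -/
def step (S : CTS X A P) : X → X → Prop := fun q q' => ∃ α, S.T q α q'

/-- The enabled actions at `q`. -/
def en (S : CTS X A P) (q : X) : Set A := {α | ∃ q', S.T q α q'}

/-- Reachability from the initial state. -/
def Reach (S : CTS X A P) (q : X) : Prop := Relation.ReflTransGen S.step S.q0 q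

/-- `α` right-commutes with `β`:  `→α ∘ →β ⊆ →β ∘ →α`. -/
def RightComm (S : CTS X A P) (α β : A) : Prop :=
  ∀ x z, RComp (S.rel α) (S.rel β) x z → RComp (S.rel β) (S.rel α) x z

/-- `α` left-commutes with `β`:  `→α ∘ →β ⊇ →β ∘ →α`. -/
def LeftComm (S : CTS X A P) (α β : A) : Prop :=
  ∀ x z, RComp (S.rel β) (S.rel α) x z → RComp (S.rel α) (S.rel β) x z

/-- `α` and `β` strongly commute:  `c ◁ (→α ∘ →β) = c ◁ (→β ∘ →α)` where
`c` is the set of states where both are enabled. -/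
def StrongComm (S : CTS X A P) (α β : A) : Prop :=
  ∀ x z, α ∈ S.en x → β ∈ S.en x →
    (RComp (S.rel α) (S.rel β) x z ↔ RComp (S.rel β) (S.rel α) x z)

/-- Finite paths, labelled by a list of actions. -/
def Path (S : CTS X A P) : X → List A → X → Prop
  | q, [], q'' => q = q''
  | q, a :: as, q'' => ∃ q', S.T q a q' ∧ S.Path q' as q''

/-- `E` is a necessary enabling set (NES) for `α` at `q1`. -/
def IsNES (S : CTS X A P) (α : A) (q1 : X) (E : Set A) : Prop :=
  ∀ (as : List A) (qn : X), S.Path q1 as qn → α ∉ S.en q1 → α ∈ S.en qn →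
    ∃ β ∈ E, β ∈ as

end CTS

/-- The three commutativity modes ←, →, ↔. -/
inductive StarMode : Type
  | left | right | strong

/-- ⋆-commutativity. -/
def CTS.StarComm (S : CTS X A P) : StarMode → A → A → Prop
  | .left => S.LeftComm
  | .right => S.RightComm
  | .strong => S.StrongComm

/-- `B` is semi-⋆-stubborn at `q` (conditions D1 and D2). -/
def CTS.SemiStubborn (S : CTS X A P) (st : StarMode) (q : X) (B : Set A) : Prop :=
  (∀ α ∈ B, α ∉ S.en q → ∃ E, S.IsNES α q E ∧ E ⊆ B) ∧
  (∀ α ∈ B, α ∈ S.en q → ∀ β, ¬ S.StarComm st α β → β ∈ B)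

/-- `B` is ⋆-stubborn at `q` (additionally condition D0). -/
def CTS.Stubborn (S : CTS X A P) (st : StarMode) (q : X) (B : Set A) : Prop :=
  S.SemiStubborn st q B ∧ ((S.en q).Nonempty → (B ∩ S.en q).Nonempty)

/-- Process `i` is dynamically left-moving at `q`. -/
def CTS.lmv (S : CTS X A P) (i : P) (q : X) : Prop :=
  ∃ B : Set A, S.SemiStubborn .left q B ∧ B ∩ S.en q = {a | S.proc a = i} ∩ S.en q

/-- The transition `(q,α,q')` of process `i` is dynamically right-moving. -/
def CTS.rmv (S : CTS X A P) (i : P) (q : X) (α : A) (q' : X) : Prop :=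
  ∃ B : Set A, S.SemiStubborn .right q B ∧ α ∈ B ∧
    B ∩ S.en q' ⊆ {a | S.proc a = i} ∧ B ∩ S.en q = {α}

/-- The set `A⊖` of actions that can disable `Y`. -/
def Aminus (S : CTS X A P) (Y : Set X) : Set A :=
  {α | ∃ q ∈ Y, ∃ q', q' ∉ Y ∧ S.T q α q'}

/-- The set `A⊕` of actions that can enable `Y`. -/
def Aplus (S : CTS X A P) (Y : Set X) : Set A :=
  {α | ∃ q, q ∉ Y ∧ ∃ q' ∈ Y, S.T q α q'}

/-- Phase vectors `H = {N,R,L}^P`. -/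
abbrev HVec (P : Type) := P → Phase

/-- The initial phase vector (all external). -/
def h0 (P : Type) : HVec P := fun _ => Phase.N

/-- The transition relation `T'_i` of the transaction system. -/
def TStep (S : CTS X A P) (Y : Set X) (i : P) :
    X × HVec P → A → X × HVec P → Prop :=
  fun s α s' =>
    S.T s.1 α s'.1 ∧ S.proc α = i ∧ (∀ j, j ≠ i → s'.2 j = s.2 j) ∧
    (s'.2 i = Phase.R ↔ (s.2 i ≠ Phase.L ∧ S.rmv i s.1 α s'.1 ∧ α ∉ Aminus S Y)) ∧
    (s'.2 i = Phase.L → (S.lmv i s'.1 ∧ S.en s'.1 ∩ {a | S.proc a = i} ∩ Aplus S Y = ∅))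

/-- The transaction system CTS' of a CTS. -/
def TSys (S : CTS X A P) (Y : Set X) : CTS (X × HVec P) A P where
  T := fun s α s' => TStep S Y (S.proc α) s α s'
  proc := S.proc
  q0 := (S.q0, h0 P)

/-- States whose `i`-phase is external. -/
def Npart (i : P) : Set (X × HVec P) := {s | s.2 i = Phase.N}

/-- States whose `i`-phase is the pre-phase. -/
def Rpart (i : P) : Set (X × HVec P) := {s | s.2 i = Phase.R}

/-- States whose `i`-phase is the post-phase. -/
def Lpart (i : P) : Set (X × HVec P) := {s | s.2 i = Phase.L}

/-- Generic `↪_i = (⋂_{j≠i} N_j) ◁ →_i`. -/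
def hookG {S : Type _} (stepOf : P → S → S → Prop) (Np : P → Set S) (i : P) : S → S → Prop :=
  fun q q' => (∀ j, j ≠ i → q ∈ Np j) ∧ stepOf i q q'

/-- Generic `⇒_i = N_i ◁ ((↪_i ▷ co-N_i)^* ∘ (↪_i ▷ N_i))`. -/
def rstepG {S : Type _} (stepOf : P → S → S → Prop) (Np : P → Set S) (i : P) : S → S → Prop :=
  fun q q'' => q ∈ Np i ∧
    RComp (Relation.ReflTransGen (fun a b => hookG stepOf Np i a b ∧ b ∉ Np i))
          (fun a b => hookG stepOf Np i a b ∧ b ∈ Np i) q q''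

/-- `↪_i` for the transaction system. -/
def hook (S : CTS X A P) (Y : Set X) (i : P) : X × HVec P → X × HVec P → Prop :=
  hookG (TSys S Y).stepOf (fun j => Npart j) i

/-- `⇒_i` for the transaction system. -/
def rstep (S : CTS X A P) (Y : Set X) (i : P) : X × HVec P → X × HVec P → Prop :=
  rstepG (TSys S Y).stepOf (fun j => Npart j) i

/-- Reachability in the reduced transaction system (RTS). -/
def ReachRTS (S : CTS X A P) (Y : Set X) (s : X × HVec P) : Prop :=
  Relation.ReflTransGen (fun a b => ∃ i, rstep S Y i a b) (S.q0, h0 P) s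

/-- Thread bisimulation: an equivalence relation that transfers `→_i`-steps. -/
def CTS.ThreadBisim (S : CTS X A P) (R : X → X → Prop) : Prop :=
  Equivalence R ∧
  ∀ (i : P) (q q' q1 : X), R q q' → S.stepOf i q q1 → ∃ q1', S.stepOf i q' q1' ∧ R q1 q1'

/-- The phase-forgetting relation `≅_i` on transaction-system states. -/
def phEq (i : P) : (X × HVec P) → (X × HVec P) → Prop :=
  fun s s' => s.1 = s'.1 ∧ ∀ j, j ≠ i → s.2 j = s'.2 j

/-- `≅_Z`: transitive closure of the union of the `≅_i` for `i ∈ Z`. -/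
def phEqZ (Z : Set P) : (X × HVec P) → (X × HVec P) → Prop :=
  Relation.TransGen (fun a b => ∃ k ∈ Z, phEq k a b)

/-- Right restriction `r ▷ W`. -/
def restR {S : Type _} (r : S → S → Prop) (W : Set S) : S → S → Prop :=
  fun x y => r x y ∧ y ∈ W

/-- Left restriction `W ◁ r`. -/
def restL {S : Type _} (W : Set S) (r : S → S → Prop) : S → S → Prop :=
  fun x y => x ∈ W ∧ r x y

/-- `r` right-commutes with `s` up to `e`:  `r ∘ s ∘ e ⊆ s ∘ r ∘ e`. -/
def RightCommUpTo {S : Type _} (r s e : S → S → Prop) : Prop :=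
  ∀ x z, RComp r (RComp s e) x z → RComp s (RComp r e) x z

/-- `r` left-commutes with `s` up to `e`:  `r ∘ s ∘ e ⊇ s ∘ r ∘ e`. -/
def LeftCommUpTo {S : Type _} (r s e : S → S → Prop) : Prop :=
  ∀ x z, RComp s (RComp r e) x z → RComp r (RComp s e) x z

/-- the phase-forgetting relation `≅_i` is a thread bisimulation
of the transaction system. -/
theorem phEq_threadBisim {X A P : Type} [Finite A] [Finite P]
    (S : CTS X A P) (Y : Set X) (i : P) :
    (TSys S Y).ThreadBisim (phEq i) := by
  classical
  refine ⟨⟨fun _ => ⟨rfl, fun _ _ => rfl⟩,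
    fun h => ⟨h.1.symm, fun j hj => (h.2 j hj).symm⟩,
    fun h h' => ⟨h.1.trans h'.1, fun j hj => (h.2 j hj).trans (h'.2 j hj)⟩⟩, ?_⟩
  rintro k ⟨q, h⟩ ⟨q', h'⟩ ⟨q1, h1⟩ ⟨hq, hh⟩ ⟨α, hα, hT, -, hframe, hR, hL⟩
  simp only [TSys] at hq hh hα hT hframe hR hL
  subst hq hα
  by_cases hk : S.proc α = i
  · -- Only the phase of the moving process was forgotten: recompute it at the second state,
    -- as `R` where that is forced and as the always permitted `N` otherwise.
    subst hk
    refine ⟨(q1, Function.update h' (S.proc α)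
      (if h' (S.proc α) ≠ Phase.L ∧ S.rmv (S.proc α) q α q1 ∧ α ∉ Aminus S Y
        then Phase.R else Phase.N)), ⟨α, rfl, hT, rfl, ?_, ?_, ?_⟩, rfl, ?_⟩
    · intro j hj
      simp [Function.update_of_ne hj]
    · simp only [Function.update_self]
      split_ifs with hc
      · exact iff_of_true rfl hc
      · exact iff_of_false (by simp) hc
    · simp only [Function.update_self]
      split_ifs <;> simp
    · intro j hj
      simp [Function.update_of_ne hj, hframe j hj, hh j hj]
  · -- The moving process has the same phase in both states, so its new phase can be copied.
    refine ⟨(q1, Function.update h1 i (h' i)), ⟨α, rfl, hT, rfl, ?_, ?_, ?_⟩, rfl, ?_⟩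
    · intro j hj
      by_cases hji : j = i
      · subst hji
        simp
      · simp [Function.update_of_ne hji, hframe j hj, hh j hji]
    · simpa [Function.update_of_ne hk, ← hh _ hk] using hR
    · simpa [Function.update_of_ne hk] using hL
    · intro j hj
      simp [Function.update_of_ne hj]

end TRF
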